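/- Let C be a Weyl candidate on Minkowski space V, let α, β be real numbers, let A := (1/8) C^{μνλρ} C_{μνλρ} and 𝖡 := (1/8) C^{μνλρ} (C*)_{μνλρ}, and let G_{μνλρ} := η_{μλ}η_{νρ} − η_{μρ}η_{νλ}. Then the 4-linear form ℛ_{μνλρ} := ½ C^{στ}_{ μν} C_{στλρ} + α C_{μνλρ} + β (C*)_{μνλρ} − (1/3)( A G_{μνλρ} − 𝖡 η_{μνλρ} ) is itself a Weyl candidate, i.e. it satisfies the pair antisymmetries, the pair-exchange symmetry, the first Bianchi identity, and trace-freeness with respect to η. -/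

import Mathlib

noncomputable section

/-- Minkowski space `V = ℝ⁴`. -/
abbrev V4 : Type := Fin 4 → ℝ

/-- The Minkowski bilinear form of signature `(-,+,+,+)`. -/
def η (x y : V4) : ℝ := -(x 0 * y 0) + x 1 * y 1 + x 2 * y 2 + x 3 * y 3

/-- The standard basis of `V4`. -/
def e4 (a : Fin 4) : V4 := Pi.single a 1

/-- Components of the Minkowski metric `diag(-1,1,1,1)` (its own inverse). -/
def ηm (a b : Fin 4) : ℝ := if a = b then (if a = (0 : Fin 4) then -1 else 1) else 0

/-- A 4-linear form on `V4`, given by its components in the standard basis. -/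
abbrev T4 : Type := Fin 4 → Fin 4 → Fin 4 → Fin 4 → ℝ

/-- A bilinear form on `V4`, given by its components in the standard basis. -/
abbrev T2 : Type := Fin 4 → Fin 4 → ℝ

/-- Evaluation of a 4-linear form (given by components) on vectors. -/
def eval4 (W : T4) (x y z w : V4) : ℝ :=
  ∑ a : Fin 4, ∑ b : Fin 4, ∑ c : Fin 4, ∑ d : Fin 4, W a b c d * x a * y b * z c * w d

/-- The alternating volume 4-form with `vol(e₀,e₁,e₂,e₃) = 1`. -/
def volv (x y z w : V4) : ℝ := Matrix.det (Matrix.of ![x, y, z, w])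

/-- Components `η_{αβγδ}` of the volume form. -/
def volc (a b c d : Fin 4) : ℝ := volv (e4 a) (e4 b) (e4 c) (e4 d)

/-- Left dual `(*W)_{μνλρ} = ½ η_{μν}{}^{αβ} W_{αβλρ}`. -/
def leftDual (W : T4) : T4 := fun μ ν lam ρ =>
  (1/2) * ∑ γ : Fin 4, ∑ δ : Fin 4, ∑ a : Fin 4, ∑ b : Fin 4,
    volc μ ν γ δ * ηm γ a * ηm δ b * W a b lam ρ

/-- Right dual `(W*)_{μνλρ} = ½ W_{μν}{}^{αβ} η_{αβλρ}`. -/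
def rightDual (W : T4) : T4 := fun μ ν lam ρ =>
  (1/2) * ∑ γ : Fin 4, ∑ δ : Fin 4, ∑ a : Fin 4, ∑ b : Fin 4,
    W μ ν a b * ηm a γ * ηm b δ * volc γ δ lam ρ

/-- A Weyl candidate: pair antisymmetries, pair exchange, first Bianchi, trace-free. -/
def IsWeyl (W : T4) : Prop :=
  (∀ x y z w : V4, eval4 W x y z w = - eval4 W y x z w) ∧
  (∀ x y z w : V4, eval4 W x y z w = - eval4 W x y w z) ∧
  (∀ x y z w : V4, eval4 W x y z w = eval4 W z w x y) ∧
  (∀ x y z w : V4, eval4 W x y z w + eval4 W x z w y + eval4 W x w y z = 0) ∧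
  (∀ x y : V4, ∑ a : Fin 4, ∑ b : Fin 4, ηm a b * eval4 W (e4 a) x (e4 b) y = 0)

/-- Electric part `E(W)_{ab} = W(e_a, n, e_b, n)`. -/
def Epart (W : T4) (n : V4) : T2 := fun a b => eval4 W (e4 a) n (e4 b) n

/-- Magnetic part `B(W)_{ab} = (W*)(e_a, n, e_b, n)`. -/
def Bpart (W : T4) (n : V4) : T2 := fun a b => eval4 (rightDual W) (e4 a) n (e4 b) n

/-- Raise both indices of a bilinear form's components. -/
def up2 (S : T2) : T2 := fun a b => ∑ c : Fin 4, ∑ d : Fin 4, ηm a c * ηm b d * S c d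

/-- Full contraction `S_{ab} T^{ab}`. -/
def contr2 (S T : T2) : ℝ := ∑ a : Fin 4, ∑ b : Fin 4, S a b * up2 T a b

/-- Raise all four indices with `η`. -/
def up4 (W : T4) : T4 := fun a b c d =>
  ∑ a' : Fin 4, ∑ b' : Fin 4, ∑ c' : Fin 4, ∑ d' : Fin 4,
    ηm a a' * ηm b b' * ηm c c' * ηm d d' * W a' b' c' d'

/-- Full contraction `S^{μνλρ} T_{μνλρ}`. -/
def contr4 (S T : T4) : ℝ :=
  ∑ a : Fin 4, ∑ b : Fin 4, ∑ c : Fin 4, ∑ d : Fin 4, up4 S a b c d * T a b c d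

/-- Components of `G_{μνλρ} = η_{μλ}η_{νρ} − η_{μρ}η_{νλ}`. -/
def Gc : T4 := fun μ ν lam ρ => ηm μ lam * ηm ν ρ - ηm μ ρ * ηm ν lam

/-!
Through `½ W_{ab}{}^{cd}` a 4-linear form is an operator on bivectors; `volc` becomes the Hodge
star `⋆`, with `⋆² = -1`, and `Gc` the identity.  The Lanczos identity
`⋆ W ⋆ = (Ricci part) - (tr W) 1 - W` shows that the trace-free condition says that `W` commutes
with `⋆` and has trace zero, while the Bianchi identity says that `tr (W ⋆) = 0`.  So Weyl
candidates are the self-adjoint operators that are complex linear for the complex structure `⋆`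
and have complex trace zero.  They are stable under real combinations and under multiplication
by `⋆`, and `ℛ` is the complex trace-free part of `C²` plus `α C + β C ⋆`, since
`tr 1 = 6`, `tr ⋆ = 0`, `A = ½ tr C²` and `𝖡 = ½ tr (C² ⋆)`.
-/

open Matrix

local notation "δ₄" => (1 : Matrix (Fin 4) (Fin 4) ℝ)

lemma det_fin_four_eq_sum_minors {R : Type*} [CommRing R] (M : Matrix (Fin 4) (Fin 4) R) :
    M.det =
      (M 0 0 * M 1 1 - M 0 1 * M 1 0) * (M 2 2 * M 3 3 - M 2 3 * M 3 2)
      - (M 0 0 * M 2 1 - M 0 1 * M 2 0) * (M 1 2 * M 3 3 - M 1 3 * M 3 2)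
      + (M 0 0 * M 3 1 - M 0 1 * M 3 0) * (M 1 2 * M 2 3 - M 1 3 * M 2 2)
      + (M 1 0 * M 2 1 - M 1 1 * M 2 0) * (M 0 2 * M 3 3 - M 0 3 * M 3 2)
      - (M 1 0 * M 3 1 - M 1 1 * M 3 0) * (M 0 2 * M 2 3 - M 0 3 * M 2 2)
      + (M 2 0 * M 3 1 - M 2 1 * M 3 0) * (M 0 2 * M 1 3 - M 0 3 * M 1 2) := by
  rw [det_succ_row_zero]
  simp only [Fin.sum_univ_four, det_fin_three, submatrix_apply, Fin.succAbove, Fin.reduceSucc,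
    Fin.reduceCastSucc, Fin.reduceLT, Fin.coe_ofNat_eq_mod, ↓reduceIte]
  ring

section Kronecker

variable {n R : Type*} [DecidableEq n] [CommRing R]

/-- The generalized Kronecker delta `δ_{ab}^{cd} = δ_a^c δ_b^d - δ_a^d δ_b^c`. -/
def kronecker₂ (a b c d : n) : R :=
  (1 : Matrix n n R) a c * (1 : Matrix n n R) b d - (1 : Matrix n n R) a d * (1 : Matrix n n R) b c

lemma kronecker₂_pair_exchange (a b c d : n) :
    (kronecker₂ a b c d : R) = kronecker₂ c d a b := by
  simp only [kronecker₂, one_apply, @eq_comm _ a, @eq_comm _ b]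
  ring

variable [Fintype n]

lemma sum_kronecker₂_mul_single (x : n → R) (a b c : n) :
    ∑ e, kronecker₂ a e b c * x e =
      (1 : Matrix n n R) a b * x c - (1 : Matrix n n R) a c * x b := by
  simp [kronecker₂, sub_mul, Finset.sum_sub_distrib, one_apply]

lemma sum_kronecker₂_mul (f : n → n → R) (a b : n) :
    ∑ c, ∑ d, kronecker₂ a b c d * f c d = f a b - f b a := by
  simp [kronecker₂, sub_mul, Finset.sum_sub_distrib, one_apply]

lemma sum_kronecker₂_mul_of_antisymm {f : n → n → R} (hf : ∀ a b, f a b = -f b a) (a b : n) :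
    ∑ c, ∑ d, kronecker₂ a b c d * f c d = 2 * f a b := by
  rw [sum_kronecker₂_mul, hf b a]
  ring

end Kronecker

lemma e4_eq_one_row (a : Fin 4) : e4 a = δ₄ a :=
  funext fun _ => one_eq_pi_single.symm

lemma volc_eq_det_submatrix (a b c d : Fin 4) :
    volc a b c d = ((δ₄).submatrix ![a, b, c, d] id).det := by
  unfold volc volv
  congr 1
  ext i j
  fin_cases i <;> exact congrFun (e4_eq_one_row _) j

lemma volc_mul_volc_eq_det (a b c d a' b' c' d' : Fin 4) :
    volc a b c d * volc a' b' c' d' =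
      ((δ₄).submatrix ![a, b, c, d] ![a', b', c', d']).det := by
  rw [volc_eq_det_submatrix, volc_eq_det_submatrix,
    ← det_transpose (submatrix _ ![a', b', c', d'] _), ← det_mul,
    transpose_submatrix, transpose_one, ← submatrix_mul _ _ _ _ _ Function.bijective_id, mul_one]

lemma volc_mul_volc (a b c d a' b' c' d' : Fin 4) :
    volc a b c d * volc a' b' c' d' =
      kronecker₂ a b a' b' * kronecker₂ c d c' d' - kronecker₂ a c a' b' * kronecker₂ b d c' d'
      + kronecker₂ a d a' b' * kronecker₂ b c c' d' + kronecker₂ b c a' b' * kronecker₂ a d c' d'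
      - kronecker₂ b d a' b' * kronecker₂ a c c' d'
      + kronecker₂ c d a' b' * kronecker₂ a b c' d' := by
  rw [volc_mul_volc_eq_det, det_fin_four_eq_sum_minors]
  rfl

lemma volc_swap_fst_snd (a b c d : Fin 4) : volc a b c d = -volc b a c d := by
  simp only [volc, volv, det_fin_four_eq_sum_minors, of_apply, cons_val]
  ring

lemma volc_pair_exchange (a b c d : Fin 4) : volc a b c d = volc c d a b := by
  simp only [volc, volv, det_fin_four_eq_sum_minors, of_apply, cons_val]
  ring

lemma ηm_mul_ηm_self (a b : Fin 4) : ηm a b * ηm b b = δ₄ a b := by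
  unfold ηm
  rw [one_apply]
  grind

lemma ηm_self_mul_self (a : Fin 4) : ηm a a * ηm a a = 1 := by
  rw [ηm_mul_ηm_self, one_apply_eq]

lemma ηm_eq_mul_one (a b : Fin 4) : ηm a b = ηm a a * δ₄ a b := by
  simp [ηm, one_apply]

lemma ηm_comm (a b : Fin 4) : ηm a b = ηm b a := by
  unfold ηm
  grind

lemma sum_ηm_mul (x : Fin 4 → ℝ) (a : Fin 4) : ∑ b, ηm a b * x b = ηm a a * x a := by
  simp [ηm]

lemma sum_ηm_self_mul_ηm_mul (x : Fin 4 → ℝ) (a : Fin 4) :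
    ∑ b, ηm b b * (ηm a b * x b) = x a := by
  simp only [mul_left_comm, sum_ηm_mul]
  rw [← mul_assoc, ηm_self_mul_self, one_mul]

lemma sum_ηm_mul_ηm_mul (f : Fin 4 → Fin 4 → ℝ) (a b : Fin 4) :
    ∑ c, ∑ d, ηm a c * ηm b d * f c d = ηm a a * ηm b b * f a b := by
  simp only [mul_assoc, ← Finset.mul_sum, sum_ηm_mul]

lemma ηm_mul_volc (a b c d : Fin 4) :
    ηm a a * ηm b b * ηm c c * ηm d d * volc a b c d = -volc a b c d := by
  let p := ![a, b, c, d]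
  let M := (δ₄).submatrix p id
  have hM : of (fun i j => ηm (p i) (p i) * M i j) = of fun i j => ηm j j * M i j := by
    ext i j
    by_cases h : p i = j <;> simp [M, submatrix_apply, one_apply, h]
  have hprod : ∏ j, ηm j j = -1 := by simp [ηm]
  have hdet := congrArg det hM
  rw [det_mul_column, det_mul_row, hprod, Fin.prod_univ_four, ← volc_eq_det_submatrix,
    neg_one_mul] at hdet
  exact hdet

lemma sum_volc_mul_volc_mul {f : T4} (h₁ : ∀ a b c d, f a b c d = -f b a c d)
    (h₂ : ∀ a b c d, f a b c d = -f a b d c) (a b c d : Fin 4) :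
    ∑ e, ∑ f', ∑ g, ∑ h, volc a b e f' * volc c d g h * f e f' g h =
      2 * kronecker₂ a b c d * ∑ e, ∑ g, f e g e g + 4 * (f c d a b
        - δ₄ a c * ∑ e, f d e b e
        + δ₄ a d * ∑ e, f c e b e
        + δ₄ b c * ∑ e, f d e a e
        - δ₄ b d * ∑ e, f c e a e) := by
  have hgh (e f' : Fin 4) : ∑ g, ∑ h, volc a b e f' * volc c d g h * f e f' g h =
      2 * (kronecker₂ a b c d * f e f' e f' - kronecker₂ a e c d * f e f' b f'
        + kronecker₂ a f' c d * f e f' b e + kronecker₂ b e c d * f e f' a f'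
        - kronecker₂ b f' c d * f e f' a e + kronecker₂ e f' c d * f e f' a b) := by
    simp only [volc_mul_volc, add_mul, sub_mul, mul_assoc, Finset.sum_add_distrib,
      Finset.sum_sub_distrib, ← Finset.mul_sum, sum_kronecker₂_mul_of_antisymm (h₂ e f')]
    ring
  have htrace (y z : Fin 4) : ∑ e, ∑ g, kronecker₂ y g c d * f e g z e =
      δ₄ y d * ∑ e, f c e z e - δ₄ y c * ∑ e, f d e z e := by
    simp only [sum_kronecker₂_mul_single, h₁ _ c, h₁ _ d, Finset.sum_sub_distrib, mul_neg,
      Finset.sum_neg_distrib, Finset.mul_sum]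
    ring
  have hpair : ∑ e, ∑ f', kronecker₂ e f' c d * f e f' a b = 2 * f c d a b := by
    simp only [kronecker₂_pair_exchange _ _ c d,
      sum_kronecker₂_mul_of_antisymm fun e f' => h₁ e f' a b]
  simp only [hgh, ← Finset.mul_sum, Finset.sum_add_distrib, Finset.sum_sub_distrib, htrace, hpair]
  simp only [sum_kronecker₂_mul_single]
  ring

/-- `W` is a symmetric bilinear form on bivectors, in components. -/
structure IsBivectorForm (W : T4) : Prop where
  antisymm (a b c d) : W a b c d = -W b a c d
  pair_symm (a b c d) : W a b c d = W c d a b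

lemma IsBivectorForm.antisymm_right {W : T4} (hW : IsBivectorForm W) (a b c d : Fin 4) :
    W a b c d = -W a b d c := by
  rw [hW.pair_symm, hW.antisymm, hW.pair_symm]

/-- The operator `½ W_{ab}{}^{cd}` on bivectors, as a matrix over ordered index pairs.  The factor
`½` compensates for each bivector being counted twice, so that `W ↦ bivectorOp W` turns contraction
over an unordered pair of indices into the matrix product. -/
def bivectorOp : T4 →ₗ[ℝ] Matrix (Fin 4 × Fin 4) (Fin 4 × Fin 4) ℝ where
  toFun W := of fun p q => W p.1 p.2 q.1 q.2 * ηm q.1 q.1 * ηm q.2 q.2 / 2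
  map_add' W W' := by
    ext
    simp only [of_apply, Pi.add_apply, Matrix.add_apply]
    ring
  map_smul' r W := by
    ext
    simp only [of_apply, Pi.smul_apply, Matrix.smul_apply, smul_eq_mul, RingHom.id_apply]
    ring

lemma bivectorOp_apply (W : T4) (p q : Fin 4 × Fin 4) :
    bivectorOp W p q = W p.1 p.2 q.1 q.2 * ηm q.1 q.1 * ηm q.2 q.2 / 2 := rfl

lemma eq_two_mul_bivectorOp (W : T4) (a b c d : Fin 4) :
    W a b c d = 2 * (bivectorOp W (a, b) (c, d) * ηm c c * ηm d d) := by
  simp only [bivectorOp_apply]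
  linear_combination -W a b c d * ηm c c * ηm c c * ηm_self_mul_self d
    - W a b c d * ηm_self_mul_self c

lemma bivectorOp_injective : Function.Injective bivectorOp := fun W W' h => by
  ext a b c d
  rw [eq_two_mul_bivectorOp W, h, ← eq_two_mul_bivectorOp]

lemma bivectorOp_Gc_apply (a b c d : Fin 4) :
    bivectorOp Gc (a, b) (c, d) = kronecker₂ a b c d / 2 := by
  simp only [bivectorOp_apply, Gc, kronecker₂]
  linear_combination
    (1 / 2) * (ηm b d * ηm d d * ηm_mul_ηm_self a c + δ₄ a c * ηm_mul_ηm_self b d)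
      - (1 / 2) * (ηm b c * ηm c c * ηm_mul_ηm_self a d + δ₄ a d * ηm_mul_ηm_self b c)

/-- The Gram matrix of the metric that `η` induces on bivectors. -/
def bivectorMetric : Matrix (Fin 4 × Fin 4) (Fin 4 × Fin 4) ℝ :=
  diagonal fun p => ηm p.1 p.1 * ηm p.2 p.2

lemma isSelfAdjoint_bivectorOp_iff {W : T4} :
    bivectorMetric.IsSelfAdjoint (bivectorOp W) ↔ ∀ a b c d, W a b c d = W c d a b := by
  have hη (a : Fin 4) : ηm a a ≠ 0 := fun h => by simpa [h] using ηm_self_mul_self a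
  rw [Matrix.IsSelfAdjoint, Matrix.IsAdjointPair, ← Matrix.ext_iff]
  simp only [bivectorMetric, mul_diagonal, diagonal_mul, transpose_apply, bivectorOp_apply,
    Prod.forall]
  refine forall₂_congr fun a b => forall₂_congr fun c d => ⟨fun h => ?_, fun h => ?_⟩
  · have hs : ηm a a * ηm b b * ηm c c * ηm d d ≠ 0 := by simp [hη]
    apply mul_right_cancel₀ hs
    linear_combination -2 * h
  · rw [h]
    ring

lemma bivectorOp_Gc_mul_iff {W : T4} :
    bivectorOp Gc * bivectorOp W = bivectorOp W ↔ ∀ a b c d, W a b c d = -W b a c d := by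
  have hentry (a b c d : Fin 4) : (bivectorOp Gc * bivectorOp W) (a, b) (c, d) =
      (bivectorOp W (a, b) (c, d) - bivectorOp W (b, a) (c, d)) / 2 := by
    simp only [mul_apply, Fintype.sum_prod_type, bivectorOp_Gc_apply, div_mul_eq_mul_div,
      ← Finset.sum_div]
    rw [sum_kronecker₂_mul]
  rw [← Matrix.ext_iff]
  simp only [Prod.forall, hentry]
  refine ⟨fun h a b c d => ?_, fun h a b c d => ?_⟩
  · rw [eq_two_mul_bivectorOp W a, eq_two_mul_bivectorOp W b]
    linear_combination -4 * ηm c c * ηm d d * h a b c d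
  · simp only [bivectorOp_apply, h b a]
    ring

/-- The Ricci contraction `η^{ac} W_{abcd}`. -/
def ricci (W : T4) : T2 := fun b d => ∑ a, ηm a a * W a b a d

/-- The Kulkarni–Nomizu product of `η` and `h`. -/
def kulkarniNomizu (h : T2) : T4 := fun a b c d =>
  ηm a c * h b d + ηm b d * h a c - ηm a d * h b c - ηm b c * h a d

lemma IsBivectorForm.ricci_comm {W : T4} (hW : IsBivectorForm W) (b d : Fin 4) :
    ricci W b d = ricci W d b :=
  Finset.sum_congr rfl fun a _ => by rw [hW.pair_symm]

lemma IsBivectorForm.sum_bivectorOp {W : T4} (hW : IsBivectorForm W) (b d : Fin 4) :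
    ∑ a, bivectorOp W (b, a) (d, a) = ηm d d * ricci W b d / 2 := by
  simp only [ricci, Finset.mul_sum, Finset.sum_div, bivectorOp_apply]
  refine Finset.sum_congr rfl fun a _ => ?_
  rw [hW.antisymm b, hW.antisymm_right a]
  ring

lemma trace_bivectorOp (W : T4) :
    (bivectorOp W).trace = ∑ a, ∑ b, bivectorOp W (a, b) (a, b) :=
  Fintype.sum_prod_type _

lemma bivectorOp_volc_apply (a b c d : Fin 4) :
    bivectorOp volc (a, b) (c, d) = -(ηm a a * ηm b b * volc a b c d) / 2 := by
  rw [bivectorOp_apply]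
  linear_combination (1 / 2) * ηm a a * ηm b b * ηm_mul_volc a b c d
    - (1 / 2) * volc a b c d * ηm c c * ηm d d *
      (ηm b b * ηm b b * ηm_self_mul_self a + ηm_self_mul_self b)

lemma volc_mul_mul_volc_apply (M : Matrix (Fin 4 × Fin 4) (Fin 4 × Fin 4) ℝ) (a b c d : Fin 4) :
    (bivectorOp volc * M * bivectorOp volc) (a, b) (c, d) =
      -(ηm a a * ηm b b * ηm c c * ηm d d) / 4 * ∑ e, ∑ f, ∑ g, ∑ h,
        volc a b e f * volc c d g h * M (e, f) (g, h) := by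
  rw [mul_assoc]
  simp only [mul_apply, Fintype.sum_prod_type, Finset.mul_sum, bivectorOp_volc_apply a b,
    bivectorOp_apply volc, volc_pair_exchange _ _ c d]
  refine Finset.sum_congr rfl fun e _ => Finset.sum_congr rfl fun f _ =>
    Finset.sum_congr rfl fun g _ => Finset.sum_congr rfl fun h _ => ?_
  ring

/-- The Lanczos identity for the double dual of `W`. -/
lemma IsBivectorForm.volc_mul_mul_volc {W : T4} (hW : IsBivectorForm W) :
    bivectorOp volc * bivectorOp W * bivectorOp volc =
      bivectorOp (kulkarniNomizu (ricci W)) - (bivectorOp W).trace • bivectorOp Gc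
        - bivectorOp W := by
  ext ⟨a, b⟩ ⟨c, d⟩
  rw [volc_mul_mul_volc_apply, sum_volc_mul_volc_mul (fun e f g h => ?_) (fun e f g h => ?_),
    ← trace_bivectorOp]
  · simp only [hW.sum_bivectorOp]
    simp only [Matrix.sub_apply, Matrix.smul_apply, smul_eq_mul,
      bivectorOp_apply, kulkarniNomizu, Gc, kronecker₂, hW.ricci_comm d, hW.ricci_comm c,
      hW.pair_symm c d, ηm_eq_mul_one a c, ηm_eq_mul_one a d, ηm_eq_mul_one b c, ηm_eq_mul_one b d]
    have ha := ηm_self_mul_self a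
    have hb := ηm_self_mul_self b
    linear_combination (1 / 2) * ηm c c * ηm d d * (
      -W a b c d * (ηm b b * ηm b b * ha + hb)
      + ηm a a * (δ₄ a c * ricci W b d - δ₄ a d * ricci W b c) * hb
      + ηm b b * (δ₄ b d * ricci W a c - δ₄ b c * ricci W a d) * ha)
  · simp only [bivectorOp_apply, hW.antisymm e f]
    ring
  · simp only [bivectorOp_apply, hW.antisymm_right e f g h]
    ring

lemma isBivectorForm_Gc : IsBivectorForm Gc where
  antisymm a b c d := by
    simp only [Gc]
    ring
  pair_symm a b c d := by
    simp only [Gc, ηm_comm c, ηm_comm d]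
    ring

lemma isBivectorForm_volc : IsBivectorForm volc := ⟨volc_swap_fst_snd, volc_pair_exchange⟩

lemma ricci_kulkarniNomizu (h : T2) (b d : Fin 4) :
    ricci (kulkarniNomizu h) b d = 2 * h b d + ηm b d * ∑ a, ηm a a * h a a := by
  have hdim : ∑ a, ηm a a * (ηm a a * h b d) = 4 * h b d := by
    simp [← mul_assoc, ηm_self_mul_self]
  have hd : ∑ a, ηm a a * (ηm a d * h b a) = h b d := by
    simpa only [ηm_comm d] using sum_ηm_self_mul_ηm_mul (h b) d
  have hb : ∑ a, ηm a a * (ηm b a * h a d) = h b d := sum_ηm_self_mul_ηm_mul (h · d) b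
  simp only [ricci, kulkarniNomizu, mul_add, mul_sub, Finset.sum_add_distrib,
    Finset.sum_sub_distrib, hdim, hd, hb, mul_left_comm _ (ηm b d), ← Finset.mul_sum]
  ring

lemma kulkarniNomizu_ηm : kulkarniNomizu ηm = (2 : ℝ) • Gc := by
  ext a b c d
  simp only [kulkarniNomizu, Gc, Pi.smul_apply, smul_eq_mul]
  ring

lemma IsBivectorForm.trace_eq_sum_ricci {W : T4} (hW : IsBivectorForm W) :
    (bivectorOp W).trace = (∑ a, ηm a a * ricci W a a) / 2 := by
  rw [trace_bivectorOp, Finset.sum_div]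
  exact Finset.sum_congr rfl fun a _ => hW.sum_bivectorOp a a

lemma ricci_Gc (b d : Fin 4) : ricci Gc b d = 3 * ηm b d := by
  have h := ricci_kulkarniNomizu ηm b d
  simp only [kulkarniNomizu_ηm, ricci, Pi.smul_apply, smul_eq_mul, mul_left_comm _ (2 : ℝ),
    ← Finset.mul_sum, ηm_self_mul_self, Finset.sum_const, Finset.card_univ, Fintype.card_fin,
    nsmul_eq_mul, Nat.cast_ofNat] at h
  simp only [ricci]
  linarith

lemma trace_bivectorOp_Gc : (bivectorOp Gc).trace = 6 := by
  rw [isBivectorForm_Gc.trace_eq_sum_ricci]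
  simp only [ricci_Gc, mul_left_comm _ (3 : ℝ), ηm_self_mul_self, Finset.sum_const,
    Finset.card_univ, Fintype.card_fin, nsmul_eq_mul]
  norm_num

lemma bivectorOp_volc_mul_self : bivectorOp volc * bivectorOp volc = -bivectorOp Gc := by
  have hkn : kulkarniNomizu (ricci Gc) = (6 : ℝ) • Gc := by
    ext a b c d
    simp only [kulkarniNomizu, ricci_Gc, Gc, Pi.smul_apply, smul_eq_mul]
    ring
  have h := isBivectorForm_Gc.volc_mul_mul_volc
  rw [mul_assoc, bivectorOp_Gc_mul_iff.2 volc_swap_fst_snd, hkn, trace_bivectorOp_Gc,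
    map_smul, sub_self, zero_sub] at h
  exact h

lemma IsBivectorForm.volc_mul_sum_volc_mul {W : T4} (hW : IsBivectorForm W) (a b c d : Fin 4) :
    volc a b c d * ∑ e, ∑ f, ∑ g, ∑ h, volc e f g h * W e f g h =
      8 * (W a b c d + W a c d b + W a d b c) := by
  have hpair (x y z w : Fin 4) : ∑ e, ∑ f, ∑ g, ∑ h,
      kronecker₂ x y e f * (kronecker₂ z w g h * W e f g h) = 4 * W x y z w := by
    simp only [← Finset.mul_sum, sum_kronecker₂_mul_of_antisymm (hW.antisymm_right _ _)]
    rw [sum_kronecker₂_mul_of_antisymm fun e f => by rw [hW.antisymm]; ring]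
    ring
  simp only [Finset.mul_sum, ← mul_assoc, volc_mul_volc, add_mul, sub_mul]
  simp only [mul_assoc, Finset.sum_add_distrib, Finset.sum_sub_distrib, hpair]
  linear_combination
    4 * (hW.pair_symm b c a d - hW.pair_symm b d a c + hW.pair_symm c d a b)
      - 8 * hW.antisymm_right a c b d

lemma trace_bivectorOp_mul_volc (W : T4) : (bivectorOp W * bivectorOp volc).trace =
    -(∑ a, ∑ b, ∑ c, ∑ d, volc a b c d * W a b c d) / 4 := by
  simp only [trace, diag_apply, mul_apply, Fintype.sum_prod_type, neg_div, Finset.sum_div,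
    ← Finset.sum_neg_distrib]
  refine Finset.sum_congr rfl fun a _ => Finset.sum_congr rfl fun b _ =>
    Finset.sum_congr rfl fun c _ => Finset.sum_congr rfl fun d _ => ?_
  rw [bivectorOp_volc_apply, bivectorOp_apply, volc_pair_exchange c]
  linear_combination -(1 / 4) * volc a b c d * W a b c d *
    (ηm d d * ηm d d * ηm_self_mul_self c + ηm_self_mul_self d)

lemma IsBivectorForm.trace_mul_volc_eq_zero_iff {W : T4} (hW : IsBivectorForm W) :
    (bivectorOp W * bivectorOp volc).trace = 0 ↔
      ∀ a b c d, W a b c d + W a c d b + W a d b c = 0 := by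
  have hsum : (bivectorOp W * bivectorOp volc).trace = 0 ↔
      ∑ a, ∑ b, ∑ c, ∑ d, volc a b c d * W a b c d = 0 := by
    simp [trace_bivectorOp_mul_volc]
  rw [hsum]
  refine ⟨fun h a b c d => ?_, fun h => ?_⟩
  · simpa [h] using hW.volc_mul_sum_volc_mul a b c d
  · have hvol : volc 0 1 2 3 = 1 := by simp [volc, volv, e4, det_fin_four_eq_sum_minors]
    simpa [h, hvol] using hW.volc_mul_sum_volc_mul 0 1 2 3

lemma IsBivectorForm.Gc_mul {W : T4} (hW : IsBivectorForm W) :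
    bivectorOp Gc * bivectorOp W = bivectorOp W :=
  bivectorOp_Gc_mul_iff.2 hW.antisymm

lemma IsBivectorForm.ricci_eq_zero_iff {W : T4} (hW : IsBivectorForm W) :
    ricci W = 0 ↔
      Commute (bivectorOp W) (bivectorOp volc) ∧ (bivectorOp W).trace = 0 := by
  constructor
  · intro h
    have htrace : (bivectorOp W).trace = 0 := by simp [hW.trace_eq_sum_ricci, h]
    have hkn : kulkarniNomizu (ricci W) = 0 := by
      ext
      simp [h, kulkarniNomizu]
    have hanti : bivectorOp volc * bivectorOp W * bivectorOp volc = -bivectorOp W := by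
      rw [hW.volc_mul_mul_volc, hkn, htrace, map_zero, zero_smul, sub_zero, zero_sub]
    have hcomm := congrArg (bivectorOp volc * ·) hanti
    simp only [← mul_assoc, bivectorOp_volc_mul_self, neg_mul, hW.Gc_mul, mul_neg,
      neg_inj] at hcomm
    exact ⟨hcomm, htrace⟩
  · rintro ⟨hcomm, htrace⟩
    have hkn : kulkarniNomizu (ricci W) = 0 := by
      have h := hW.volc_mul_mul_volc
      rw [mul_assoc, hcomm.eq, ← mul_assoc, bivectorOp_volc_mul_self, neg_mul, hW.Gc_mul, htrace,
        zero_smul, sub_zero, eq_sub_iff_add_eq, neg_add_cancel] at h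
      exact bivectorOp_injective (by rw [← h, map_zero])
    ext b d
    have h := ricci_kulkarniNomizu (ricci W) b d
    rw [hW.trace_eq_sum_ricci, div_eq_zero_iff, or_iff_left two_ne_zero] at htrace
    rw [hkn, htrace] at h
    simpa [ricci.eq_def 0] using h.symm

lemma eval4_swap_fst_snd (W : T4) (x y z w : V4) :
    eval4 W y x z w = eval4 (fun a b c d => W b a c d) x y z w := by
  unfold eval4
  rw [Finset.sum_comm]
  simp only [mul_right_comm _ (y _) (x _)]

lemma eval4_swap_snd_trd (W : T4) (x y z w : V4) :
    eval4 W x z y w = eval4 (fun a b c d => W a c b d) x y z w := by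
  unfold eval4
  refine Finset.sum_congr rfl fun a _ => ?_
  rw [Finset.sum_comm]
  simp only [mul_right_comm _ (z _) (y _)]

lemma eval4_swap_trd_fth (W : T4) (x y z w : V4) :
    eval4 W x y w z = eval4 (fun a b c d => W a b d c) x y z w := by
  unfold eval4
  refine Finset.sum_congr rfl fun a _ => Finset.sum_congr rfl fun b _ => ?_
  rw [Finset.sum_comm]
  simp only [mul_right_comm _ (w _) (z _)]

lemma eval4_add (W W' : T4) (x y z w : V4) :
    eval4 (W + W') x y z w = eval4 W x y z w + eval4 W' x y z w := by
  simp only [eval4, Pi.add_apply, add_mul, Finset.sum_add_distrib]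

lemma eval4_neg (W : T4) (x y z w : V4) : eval4 (-W) x y z w = -eval4 W x y z w := by
  simp only [eval4, Pi.neg_apply, neg_mul, Finset.sum_neg_distrib]

lemma eval4_e4 (W : T4) (a b c d : Fin 4) : eval4 W (e4 a) (e4 b) (e4 c) (e4 d) = W a b c d := by
  simp [eval4, e4, Pi.single_apply]

lemma forall_eval4_eq_iff {W W' : T4} {F : V4 → V4 → V4 → V4 → ℝ}
    (hF : ∀ x y z w, F x y z w = eval4 W' x y z w) :
    (∀ x y z w, eval4 W x y z w = F x y z w) ↔ ∀ a b c d, W a b c d = W' a b c d := by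
  simp only [hF]
  refine ⟨fun h a b c d => ?_, fun h x y z w => by simp only [eval4, h]⟩
  simpa only [eval4_e4] using h (e4 a) (e4 b) (e4 c) (e4 d)

lemma forall_eval4_eq_neg_swap_fst_snd_iff {W : T4} :
    (∀ x y z w, eval4 W x y z w = -eval4 W y x z w) ↔ ∀ a b c d, W a b c d = -W b a c d :=
  forall_eval4_eq_iff fun x y z w => by rw [eval4_swap_fst_snd, ← eval4_neg]; rfl

lemma forall_eval4_eq_neg_swap_trd_fth_iff {W : T4} :
    (∀ x y z w, eval4 W x y z w = -eval4 W x y w z) ↔ ∀ a b c d, W a b c d = -W a b d c :=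
  forall_eval4_eq_iff fun x y z w => by rw [eval4_swap_trd_fth, ← eval4_neg]; rfl

lemma forall_eval4_eq_pair_exchange_iff {W : T4} :
    (∀ x y z w, eval4 W x y z w = eval4 W z w x y) ↔ ∀ a b c d, W a b c d = W c d a b :=
  forall_eval4_eq_iff fun x y z w => by
    rw [eval4_swap_snd_trd W z x w y, eval4_swap_fst_snd _ x z, eval4_swap_trd_fth _ x z y w,
      eval4_swap_snd_trd _ x y z w]

lemma forall_eval4_cyclic_sum_eq_zero_iff {W : T4} :
    (∀ x y z w, eval4 W x y z w + eval4 W x z w y + eval4 W x w y z = 0) ↔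
      ∀ a b c d, W a b c d + W a c d b + W a d b c = 0 := by
  have hcyclic (x y z w : V4) : eval4 W x y z w + eval4 W x z w y + eval4 W x w y z =
      eval4 (W + (fun a b c d => W a c d b) + fun a b c d => W a d b c) x y z w := by
    rw [eval4_swap_trd_fth W x z y w, eval4_swap_snd_trd _ x y z w, eval4_swap_snd_trd W x y w z,
      eval4_swap_trd_fth _ x y z w, ← eval4_add, ← eval4_add]
  simp only [hcyclic]
  exact forall_eval4_eq_iff (W' := 0) fun x y z w => by simp [eval4]

lemma sum_ηm_mul_eval4 (W : T4) (x y : V4) :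
    ∑ a, ∑ b, ηm a b * eval4 W (e4 a) x (e4 b) y = ∑ b, ∑ d, ricci W b d * x b * y d := by
  have heval (a c : Fin 4) :
      eval4 W (e4 a) x (e4 c) y = ∑ b, ∑ d, W a b c d * x b * y d := by
    simp [eval4, e4, Pi.single_apply]
  simp only [sum_ηm_mul]
  simp only [heval, ricci, Finset.mul_sum, Finset.sum_mul, ← mul_assoc]
  rw [Finset.sum_comm]
  exact Finset.sum_congr rfl fun b _ => Finset.sum_comm

lemma forall_sum_ηm_mul_eval4_eq_zero_iff {W : T4} :
    (∀ x y, ∑ a, ∑ b, ηm a b * eval4 W (e4 a) x (e4 b) y = 0) ↔ ricci W = 0 := by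
  simp only [sum_ηm_mul_eval4]
  refine ⟨fun h => ?_, fun h => by simp [h]⟩
  ext b d
  simpa [e4, Pi.single_apply] using h (e4 b) (e4 d)

lemma isWeyl_iff_isBivectorForm {W : T4} : IsWeyl W ↔
    IsBivectorForm W ∧ (∀ a b c d, W a b c d + W a c d b + W a d b c = 0) ∧ ricci W = 0 := by
  rw [IsWeyl, forall_eval4_eq_neg_swap_fst_snd_iff, forall_eval4_eq_neg_swap_trd_fth_iff,
    forall_eval4_eq_pair_exchange_iff, forall_eval4_cyclic_sum_eq_zero_iff,
    forall_sum_ηm_mul_eval4_eq_zero_iff]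
  exact ⟨fun ⟨h₁, _, h₃, h⟩ => ⟨⟨h₁, h₃⟩, h⟩,
    fun ⟨hW, h⟩ => ⟨hW.antisymm, hW.antisymm_right, hW.pair_symm, h⟩⟩

/-- The operators on bivectors that correspond to Weyl candidates: self-adjoint, complex linear for
the Hodge star, and with vanishing complex trace.  `bivectorOp Gc` is a projection of matrices over
ordered pairs, so `Gc_mul` says that `w` takes values in the antisymmetric pairs. -/
structure IsWeylOperator (w : Matrix (Fin 4 × Fin 4) (Fin 4 × Fin 4) ℝ) : Prop where
  Gc_mul : bivectorOp Gc * w = w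
  isSelfAdjoint : bivectorMetric.IsSelfAdjoint w
  commute : Commute w (bivectorOp volc)
  trace_eq_zero : w.trace = 0
  trace_mul_volc_eq_zero : (w * bivectorOp volc).trace = 0

theorem isWeyl_iff_isWeylOperator {W : T4} : IsWeyl W ↔ IsWeylOperator (bivectorOp W) := by
  rw [isWeyl_iff_isBivectorForm]
  constructor
  · rintro ⟨hW, hbianchi, hricci⟩
    obtain ⟨hcomm, htrace⟩ := hW.ricci_eq_zero_iff.1 hricci
    exact ⟨hW.Gc_mul, isSelfAdjoint_bivectorOp_iff.2 hW.pair_symm, hcomm, htrace,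
      hW.trace_mul_volc_eq_zero_iff.2 hbianchi⟩
  · intro h
    have hW : IsBivectorForm W :=
      ⟨bivectorOp_Gc_mul_iff.1 h.Gc_mul, isSelfAdjoint_bivectorOp_iff.1 h.isSelfAdjoint⟩
    exact ⟨hW, hW.trace_mul_volc_eq_zero_iff.1 h.trace_mul_volc_eq_zero,
      hW.ricci_eq_zero_iff.2 ⟨h.commute, h.trace_eq_zero⟩⟩

lemma trace_bivectorOp_volc : (bivectorOp volc).trace = 0 := by
  have hvol (a b : Fin 4) : volc a b a b = 0 := by
    simp only [volc, volv, det_fin_four_eq_sum_minors, of_apply, cons_val]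
    ring
  simp [trace_bivectorOp, bivectorOp_apply, hvol]

lemma isSelfAdjoint_mul_of_commute {n R : Type*} [Fintype n] [CommRing R] {J A B : Matrix n n R}
    (hA : J.IsSelfAdjoint A) (hB : J.IsSelfAdjoint B) (h : Commute A B) :
    J.IsSelfAdjoint (A * B) := by
  unfold Matrix.IsSelfAdjoint IsAdjointPair at *
  rw [h.eq, transpose_mul, mul_assoc, hB, ← mul_assoc, hA, mul_assoc, h.eq]

lemma commute_bivectorOp_Gc_volc : Commute (bivectorOp Gc) (bivectorOp volc) := by
  rw [← neg_neg (bivectorOp Gc), ← bivectorOp_volc_mul_self]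
  exact ((Commute.refl _).mul_left (Commute.refl _)).neg_left

namespace IsWeylOperator

variable {c d : Matrix (Fin 4 × Fin 4) (Fin 4 × Fin 4) ℝ}

lemma add (hc : IsWeylOperator c) (hd : IsWeylOperator d) : IsWeylOperator (c + d) where
  Gc_mul := by rw [mul_add, hc.Gc_mul, hd.Gc_mul]
  isSelfAdjoint := by
    have hcd := And.intro hc.isSelfAdjoint hd.isSelfAdjoint
    simp only [← mem_selfAdjointMatricesSubmodule] at hcd ⊢
    exact add_mem hcd.1 hcd.2
  commute := hc.commute.add_left hd.commute
  trace_eq_zero := by rw [trace_add, hc.trace_eq_zero, hd.trace_eq_zero, add_zero]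
  trace_mul_volc_eq_zero := by
    rw [add_mul, trace_add, hc.trace_mul_volc_eq_zero, hd.trace_mul_volc_eq_zero, add_zero]

lemma smul (r : ℝ) (hc : IsWeylOperator c) : IsWeylOperator (r • c) where
  Gc_mul := by rw [Matrix.mul_smul, hc.Gc_mul]
  isSelfAdjoint := by
    have h := hc.isSelfAdjoint
    rw [← mem_selfAdjointMatricesSubmodule] at h ⊢
    exact Submodule.smul_mem _ r h
  commute := hc.commute.smul_left r
  trace_eq_zero := by rw [trace_smul, hc.trace_eq_zero, smul_zero]
  trace_mul_volc_eq_zero := by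
    rw [smul_mul, trace_smul, hc.trace_mul_volc_eq_zero, smul_zero]

lemma mul_volc (hc : IsWeylOperator c) : IsWeylOperator (c * bivectorOp volc) where
  Gc_mul := by rw [← mul_assoc, hc.Gc_mul]
  isSelfAdjoint := isSelfAdjoint_mul_of_commute hc.isSelfAdjoint
    (isSelfAdjoint_bivectorOp_iff.2 volc_pair_exchange) hc.commute
  commute := hc.commute.mul_left (Commute.refl _)
  trace_eq_zero := hc.trace_mul_volc_eq_zero
  trace_mul_volc_eq_zero := by
    rw [mul_assoc, bivectorOp_volc_mul_self, mul_neg, trace_neg, trace_mul_comm, hc.Gc_mul,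
      hc.trace_eq_zero, neg_zero]

theorem mul_self_sub_trace (hc : IsWeylOperator c) :
    IsWeylOperator (c * c - (1 / 6 : ℝ) • ((c * c).trace • bivectorOp Gc
      - (c * c * bivectorOp volc).trace • bivectorOp volc)) where
  Gc_mul := by
    simp only [mul_sub, Matrix.mul_smul, ← mul_assoc, hc.Gc_mul,
      isBivectorForm_Gc.Gc_mul, isBivectorForm_volc.Gc_mul]
  isSelfAdjoint := by
    have hcc := isSelfAdjoint_mul_of_commute hc.isSelfAdjoint hc.isSelfAdjoint (Commute.refl c)
    have hG := isSelfAdjoint_bivectorOp_iff.2 isBivectorForm_Gc.pair_symm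
    have hvol := isSelfAdjoint_bivectorOp_iff.2 volc_pair_exchange
    rw [← mem_selfAdjointMatricesSubmodule] at *
    exact sub_mem hcc <| Submodule.smul_mem _ _ <|
      sub_mem (Submodule.smul_mem _ _ hG) (Submodule.smul_mem _ _ hvol)
  commute := (hc.commute.mul_left hc.commute).sub_left <| Commute.smul_left
    ((commute_bivectorOp_Gc_volc.smul_left _).sub_left ((Commute.refl _).smul_left _)) _
  trace_eq_zero := by
    simp only [trace_sub, trace_smul, trace_bivectorOp_Gc, trace_bivectorOp_volc, smul_eq_mul]
    ring
  trace_mul_volc_eq_zero := by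
    simp only [sub_mul, smul_mul, trace_sub, trace_smul, bivectorOp_volc_mul_self, trace_neg,
      isBivectorForm_volc.Gc_mul, trace_bivectorOp_Gc, trace_bivectorOp_volc, smul_eq_mul]
    ring

end IsWeylOperator

lemma bivectorOp_rightDual (W : T4) :
    bivectorOp (rightDual W) = bivectorOp W * bivectorOp volc := by
  ext ⟨a, b⟩ ⟨c, d⟩
  have hraise (e f : Fin 4) : ∑ e', ∑ f', W a b e' f' * ηm e' e * ηm f' f * volc e f c d =
      ηm e e * ηm f f * (W a b e f * volc e f c d) := by
    rw [← sum_ηm_mul_ηm_mul fun e' f' => W a b e' f' * volc e f c d]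
    simp only [ηm_comm e, ηm_comm f]
    refine Finset.sum_congr rfl fun e' _ => Finset.sum_congr rfl fun f' _ => ?_
    ring
  simp only [mul_apply, Fintype.sum_prod_type, bivectorOp_apply, rightDual, hraise, Finset.mul_sum,
    Finset.sum_mul, Finset.sum_div]
  refine Finset.sum_congr rfl fun e _ => Finset.sum_congr rfl fun f _ => ?_
  ring

/-- The quadratic contraction `½ W^{στ}{}_{μν} W_{στλρ}`. -/
def halfSquare (W : T4) : T4 := fun a b c d =>
  (1 / 2) * ∑ e, ∑ f, ∑ e', ∑ f', ηm e e' * ηm f f' * W e' f' a b * W e f c d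

lemma bivectorOp_halfSquare {W : T4} (hW : ∀ a b c d, W a b c d = W c d a b) :
    bivectorOp (halfSquare W) = bivectorOp W * bivectorOp W := by
  ext ⟨a, b⟩ ⟨c, d⟩
  simp only [halfSquare, mul_assoc (_ * _), sum_ηm_mul_ηm_mul, mul_apply, Fintype.sum_prod_type,
    bivectorOp_apply, hW _ _ a b, Finset.mul_sum, Finset.sum_mul, Finset.sum_div]
  refine Finset.sum_congr rfl fun e _ => Finset.sum_congr rfl fun f _ => ?_
  ring

lemma up4_apply (W : T4) (a b c d : Fin 4) :
    up4 W a b c d = ηm a a * ηm b b * ηm c c * ηm d d * W a b c d := by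
  simp only [up4, mul_assoc, ← Finset.mul_sum, sum_ηm_mul]

lemma contr4_eq_trace {S : T4} (hS : ∀ a b c d, S a b c d = S c d a b) (T : T4) :
    contr4 S T = 4 * (bivectorOp S * bivectorOp T).trace := by
  rw [trace_mul_comm]
  simp only [contr4, up4_apply, trace, diag_apply, mul_apply, Fintype.sum_prod_type,
    Finset.mul_sum]
  refine Finset.sum_congr rfl fun a _ => Finset.sum_congr rfl fun b _ =>
    Finset.sum_congr rfl fun c _ => Finset.sum_congr rfl fun d _ => ?_
  rw [bivectorOp_apply, bivectorOp_apply, hS]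
  ring

/-- the 4-linear form
`ℛ = ½ C^{στ}{}_{μν}C_{στλρ} + αC + βC* − (1/3)(A G − 𝖡 η)` is itself a Weyl candidate. -/
theorem stmt_6 (C : T4) (hC : IsWeyl C) (α β : ℝ)
    (A Bs : ℝ) (hA : A = (1/8) * contr4 C C) (hBs : Bs = (1/8) * contr4 C (rightDual C))
    (R : T4)
    (hR : R = fun μ ν lam ρ =>
      (1/2) * (∑ σ : Fin 4, ∑ τ : Fin 4, ∑ σ' : Fin 4, ∑ τ' : Fin 4,
        ηm σ σ' * ηm τ τ' * C σ' τ' μ ν * C σ τ lam ρ)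
      + α * C μ ν lam ρ + β * rightDual C μ ν lam ρ
      - (1/3) * (A * Gc μ ν lam ρ - Bs * volc μ ν lam ρ)) :
    IsWeyl R := by
  have hsymm := (isWeyl_iff_isBivectorForm.1 hC).1.pair_symm
  have hc := isWeyl_iff_isWeylOperator.1 hC
  have hR_eq : R = halfSquare C + α • C + β • rightDual C
      - (1 / 3 : ℝ) • (A • Gc - Bs • volc) := hR
  have hR_op : bivectorOp R = bivectorOp C * bivectorOp C
      - (1 / 6 : ℝ) • ((bivectorOp C * bivectorOp C).trace • bivectorOp Gc
        - (bivectorOp C * bivectorOp C * bivectorOp volc).trace • bivectorOp volc)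
      + α • bivectorOp C + β • (bivectorOp C * bivectorOp volc) := by
    rw [hR_eq, hA, hBs, contr4_eq_trace hsymm, contr4_eq_trace hsymm]
    simp only [map_add, map_sub, map_smul, bivectorOp_halfSquare hsymm, bivectorOp_rightDual,
      ← mul_assoc]
    module
  rw [isWeyl_iff_isWeylOperator, hR_op]
  exact (hc.mul_self_sub_trace.add (hc.smul α)).add (hc.mul_volc.smul β)
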